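/- arXiv:1901.07778 — 3 statements merged into one kernel-verified Lean document; each statement's English description precedes it below -/
import Mathlib

section
/- Let φ : ℝ^d → (0,∞) be continuous, let (μ_n) be a sequence of finite signed Borel measures on ℝ^d converging weakly to a finite signed Borel measure μ (i.e. ∫ ψ dμ_n → ∫ ψ dμ for every bounded continuous ψ : ℝ^d → ℝ), and assume φ is integrable with respect to the total variation measure |μ|. Then ‖μ‖_φ ≤ liminf_{n→∞} ‖μ_n‖_φ. -/
open MeasureTheory Filter

/-!
The weighted total variation is dual to bounded continuous functions `ψ` with `|ψ| ≤ φ`.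
Any such `ψ` satisfies `∫ ψ dσ ≤ ‖σ‖_φ` for every signed measure `σ`
(`ofReal_integral_sub_le_lintegral`). Conversely, `‖ν‖_φ` is approximated by such integrals
(`exists_bounded_clipped_test`): if `h = ±1` is the Hahn density of `ν` with respect to `|ν|`,
then `φ h` is `|ν|`-integrable, hence `L¹`-close to a bounded continuous `f`, and clipping `f` to
the interval `[-φ, φ]`, which contains `φ h`, only decreases the pointwise distance to `φ h`.
For each fixed `ψ` the integrals converge by weak convergence, and the liminf bound follows.
-/

/-- For mutually singular finite measures `P`, `N`, the number `∫ φ d(P + N)` is approximated from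
below by `∫ ψ dP - ∫ ψ dN` with `ψ` bounded continuous and `|ψ| ≤ φ`. -/
lemma exists_bounded_clipped_test {X : Type*} [TopologicalSpace X] [MeasurableSpace X]
    [BorelSpace X] [NormalSpace X] {P N : Measure X} [IsFiniteMeasure P] [IsFiniteMeasure N]
    [(P + N).WeaklyRegular] (hPN : P.MutuallySingular N) {φ : X → ℝ} (hφc : Continuous φ)
    (hφ : ∀ y, 0 ≤ φ y) (hφint : Integrable φ (P + N)) {ε : ℝ} (hε : 0 < ε) :
    ∃ ψ : BoundedContinuousFunction X ℝ, (∀ y, |ψ y| ≤ φ y) ∧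
      ∫ y, φ y ∂(P + N) ≤ (∫ y, ψ y ∂P) - (∫ y, ψ y ∂N) + ε := by
  classical
  obtain ⟨S, hS, hPS, hNS⟩ := hPN
  -- `g` is `φ` times the Hahn density of `P - N`, as `P` lives on `Sᶜ` and `N` on `S`.
  set g : X → ℝ := S.piecewise (fun y => -φ y) φ with hg
  have hgint : Integrable g (P + N) :=
    Integrable.piecewise hS hφint.neg.integrableOn hφint.integrableOn
  obtain ⟨f, hf, hfint⟩ := hgint.exists_boundedContinuous_integral_sub_le hε
  have hgP : ∀ᵐ y ∂P, g y = φ y := by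
    filter_upwards [measure_eq_zero_iff_ae_notMem.1 hPS] with y hy
    simp [hg, hy]
  have hgN : ∀ᵐ y ∂N, g y = -φ y := by
    filter_upwards [measure_eq_zero_iff_ae_notMem.1 hNS] with y hy
    have : y ∈ S := by simpa using hy
    simp [hg, this]
  have hclip : ∀ y, |max (min (f y) (φ y)) (-φ y)| ≤ |f y| := by
    intro y
    have := hφ y
    grind
  let ψ : BoundedContinuousFunction X ℝ :=
    BoundedContinuousFunction.ofNormedAddCommGroup (fun y => max (min (f y) (φ y)) (-φ y))
      (by fun_prop) ‖f‖ (fun y => (hclip y).trans (f.norm_coe_le_norm y))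
  have hψ : ∀ y, ψ y = max (min (f y) (φ y)) (-φ y) := fun y => rfl
  refine ⟨ψ, fun y => ?_, ?_⟩
  · rw [hψ]
    have := hφ y
    grind
  have hd : Integrable (fun y => ‖g y - f y‖) (P + N) := (hgint.sub hfint).norm
  have hdP := hd.left_of_add_measure
  have hdN := hd.right_of_add_measure
  have hφP := hφint.left_of_add_measure
  have hφN := hφint.right_of_add_measure
  have h1 : ∫ y, (φ y - ψ y) ∂P ≤ ∫ y, ‖g y - f y‖ ∂P := by
    refine integral_mono_ae (hφP.sub (ψ.integrable P)) hdP ?_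
    filter_upwards [hgP] with y hy
    have := hφ y
    simp only [hy, hψ, Real.norm_eq_abs]
    grind
  have h2 : ∫ y, (φ y + ψ y) ∂N ≤ ∫ y, ‖g y - f y‖ ∂N := by
    refine integral_mono_ae (hφN.add (ψ.integrable N)) hdN ?_
    filter_upwards [hgN] with y hy
    have := hφ y
    simp only [hy, hψ, Real.norm_eq_abs]
    grind
  rw [integral_sub hφP (ψ.integrable P)] at h1
  rw [integral_add hφN (ψ.integrable N)] at h2
  rw [integral_add_measure hdP hdN] at hf
  rw [integral_add_measure hφP hφN]
  linarith

lemma ofReal_integral_sub_le_lintegral {X : Type*} [MeasurableSpace X] (P N : Measure X)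
    {φ ψ : X → ℝ} (hψ : ∀ y, |ψ y| ≤ φ y) :
    ENNReal.ofReal ((∫ y, ψ y ∂P) - ∫ y, ψ y ∂N) ≤
      ∫⁻ y, ENNReal.ofReal (φ y) ∂(P + N) := by
  have key : ∀ Q : Measure X, ENNReal.ofReal |∫ y, ψ y ∂Q| ≤ ∫⁻ y, ENNReal.ofReal (φ y) ∂Q := by
    intro Q
    rw [← Real.enorm_eq_ofReal_abs]
    refine (enorm_integral_le_lintegral_enorm _).trans (lintegral_mono fun y => ?_)
    rw [Real.enorm_eq_ofReal_abs]
    exact ENNReal.ofReal_le_ofReal (hψ y)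
  rw [lintegral_add_measure]
  calc ENNReal.ofReal ((∫ y, ψ y ∂P) - ∫ y, ψ y ∂N)
      ≤ ENNReal.ofReal (|∫ y, ψ y ∂P| + |∫ y, ψ y ∂N|) := by
        refine ENNReal.ofReal_le_ofReal ?_
        have := le_abs_self (∫ y, ψ y ∂P)
        have := neg_abs_le (∫ y, ψ y ∂N)
        linarith
    _ ≤ _ := ENNReal.ofReal_add_le
    _ ≤ _ := add_le_add (key P) (key N)


/-- Lower semicontinuity of the `φ`-weighted total variation with respect to weak
convergence of finite signed Borel measures on `ℝ^d`.  Here, for a signed measure `ν`,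
`∫ ψ dν := ∫ ψ dν⁺ − ∫ ψ dν⁻` via the Jordan decomposition, the weighted total variation
`‖ν‖_φ` is `∫⁻ φ d|ν|` (with `|ν|` the total variation measure), and weak convergence
means convergence of integrals of all bounded continuous functions. -/
theorem weighted_tv_lsc_of_weak_convergence {d : ℕ}
    (φ : (Fin d → ℝ) → ℝ) (hφc : Continuous φ) (hφpos : ∀ y, 0 < φ y)
    (μ : ℕ → SignedMeasure (Fin d → ℝ)) (ν : SignedMeasure (Fin d → ℝ))
    (hweak : ∀ ψ : BoundedContinuousFunction (Fin d → ℝ) ℝ,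
      Tendsto
        (fun n =>
          (∫ y, ψ y ∂(μ n).toJordanDecomposition.posPart) -
            ∫ y, ψ y ∂(μ n).toJordanDecomposition.negPart)
        atTop
        (nhds ((∫ y, ψ y ∂ν.toJordanDecomposition.posPart) -
          ∫ y, ψ y ∂ν.toJordanDecomposition.negPart)))
    (hφint : Integrable φ ν.totalVariation) :
    (∫⁻ y, ENNReal.ofReal (φ y) ∂ν.totalVariation) ≤
      liminf (fun n => ∫⁻ y, ENNReal.ofReal (φ y) ∂(μ n).totalVariation) atTop := by
  refine ENNReal.le_of_forall_pos_le_add fun ε hε _ => ?_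
  obtain ⟨ψ, hψ, hle⟩ := exists_bounded_clipped_test
    ν.toJordanDecomposition.mutuallySingular hφc (fun y => (hφpos y).le) hφint
    (ε := (ε : ℝ)) (by exact_mod_cast hε)
  calc ∫⁻ y, ENNReal.ofReal (φ y) ∂ν.totalVariation
      = ENNReal.ofReal (∫ y, φ y ∂ν.totalVariation) :=
        (ofReal_integral_eq_lintegral_ofReal hφint (ae_of_all _ fun y => (hφpos y).le)).symm
    _ ≤ ENNReal.ofReal ((∫ y, ψ y ∂ν.toJordanDecomposition.posPart) -
          (∫ y, ψ y ∂ν.toJordanDecomposition.negPart) + ε) := ENNReal.ofReal_le_ofReal hle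
    _ ≤ ENNReal.ofReal ((∫ y, ψ y ∂ν.toJordanDecomposition.posPart) -
          ∫ y, ψ y ∂ν.toJordanDecomposition.negPart) + ε := by
        simpa using ENNReal.ofReal_add_le (p := (∫ y, ψ y ∂ν.toJordanDecomposition.posPart) -
          ∫ y, ψ y ∂ν.toJordanDecomposition.negPart) (q := (ε : ℝ))
    _ ≤ _ := by
        gcongr
        rw [← (ENNReal.tendsto_ofReal (hweak ψ)).liminf_eq]
        exact liminf_le_liminf (Eventually.of_forall fun n =>
          ofReal_integral_sub_le_lintegral _ _ hψ)
end

section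
/- Let T > 0, let h : [0,T] → [0,∞) be Lebesgue integrable, and let g : [0,∞) → [0,∞) be increasing with g(u) > 0 for u > 0 and ∫_0^ε du/g(u) = ∞ for every ε > 0. Suppose S : [0,T] → [0,∞) is nondecreasing and satisfies S(t) ≤ ∫_0^t h(s) g(S(s)) ds for all t ∈ [0,T]. Then S(t) = 0 for all t ∈ [0,T]. -/
open MeasureTheory

/-!
Put `V t = ∫ s in 0..t, h s * g (S s)`, a continuous nondecreasing function with `V 0 = 0` and
`S ≤ V`. Monotonicity of `g` and `S` gives `V y - V x ≤ g (V y) * ∫ s in x..y, h s` for `x ≤ y`.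
If `S t₀ > 0`, then `a = V t₀ > 0`, and the intermediate value theorem yields times `τ n` with
`V (τ n) = a / 2 ^ n`, decreasing in `n`. Since `1 / g` is antitone,
the integral of `1 / g` over `(a / 2 ^ (n + 1), a / 2 ^ n]` is at most
`(a / 2 ^ (n + 1)) / g (a / 2 ^ (n + 1))`, and the increment bound on `[τ (n + 2), τ (n + 1)]`
bounds this by `2 * ∫ s in τ (n + 2)..τ (n + 1), h s`. Summing over `n` telescopes, so the integral
of `1 / g` over `(0, a]` is finite, contradicting the divergence hypothesis. Comparing with the next
dyadic block down replaces the chain rule for the absolutely continuous function `V`.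
-/

/-- The dyadic Osgood estimate, in terms of a continuous `V` and a bounded `H` (the primitive of `h`)
linked by the increment bound. -/
lemma osgood_dyadic {b M : ℝ} (hb : 0 ≤ b) {V H g : ℝ → ℝ}
    (hgpos : ∀ u, 0 < u → 0 < g u) (hgmono : MonotoneOn g (Set.Ici 0))
    (hVc : ContinuousOn V (Set.Icc 0 b)) (hVm : MonotoneOn V (Set.Icc 0 b)) (hV0 : V 0 = 0)
    (hVb : 0 < V b) (hH0 : ∀ x ∈ Set.Icc 0 b, 0 ≤ H x) (hHM : ∀ x ∈ Set.Icc 0 b, H x ≤ M)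
    (hinc : ∀ x ∈ Set.Icc 0 b, ∀ y ∈ Set.Icc 0 b, x ≤ y →
      V y - V x ≤ g (V y) * (H y - H x)) :
    (∫⁻ u in Set.Ioc (0 : ℝ) (V b), ENNReal.ofReal (1 / g u)) ≠ ⊤ := by
  set a := V b with ha
  have hlev : ∀ n : ℕ, ∃ t ∈ Set.Icc 0 b, V t = a / 2 ^ n := by
    intro n
    have hmem : a / 2 ^ n ∈ Set.Icc (V 0) (V b) := by
      rw [hV0]
      exact ⟨by positivity, div_le_self hVb.le (one_le_pow₀ (by norm_num))⟩
    exact intermediate_value_Icc hb hVc hmem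
  choose τ hτ hVτ using hlev
  have hpos : ∀ n : ℕ, 0 < a / 2 ^ n := fun n => by positivity
  have hhalf : ∀ n : ℕ, a / 2 ^ n = 2 * (a / 2 ^ (n + 1)) := fun n => by
    rw [pow_succ]; field_simp
  have hτle : ∀ n, τ (n + 1) ≤ τ n := by
    intro n
    by_contra! hlt
    have h1 := hVm (hτ n) (hτ (n + 1)) hlt.le
    rw [hVτ, hVτ] at h1
    linarith [hhalf n, hpos (n + 1)]
  have hblock : ∀ n : ℕ,
      (∫⁻ u in Set.Ioc (a / 2 ^ (n + 1)) (a / 2 ^ n), ENNReal.ofReal (1 / g u)) ≤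
        ENNReal.ofReal (2 * (H (τ (n + 1)) - H (τ (n + 2)))) := by
    intro n
    have hg := hgpos _ (hpos (n + 1))
    calc (∫⁻ u in Set.Ioc (a / 2 ^ (n + 1)) (a / 2 ^ n), ENNReal.ofReal (1 / g u))
        ≤ ∫⁻ _ in Set.Ioc (a / 2 ^ (n + 1)) (a / 2 ^ n),
            ENNReal.ofReal (1 / g (a / 2 ^ (n + 1))) := by
          refine setLIntegral_mono measurable_const fun u hu => ?_
          refine ENNReal.ofReal_le_ofReal (one_div_le_one_div_of_le hg ?_)
          exact hgmono (hpos (n + 1)).le ((hpos (n + 1)).trans hu.1).le hu.1.le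
      _ = ENNReal.ofReal ((1 / g (a / 2 ^ (n + 1))) * (a / 2 ^ (n + 1))) := by
          rw [setLIntegral_const, Real.volume_Ioc, ← ENNReal.ofReal_mul (by positivity)]
          congr 2
          linarith [hhalf n]
      _ ≤ _ := by
          refine ENNReal.ofReal_le_ofReal ?_
          have h1 := hinc _ (hτ (n + 2)) _ (hτ (n + 1)) (hτle (n + 1))
          rw [hVτ, hVτ] at h1
          rw [one_div_mul_eq_div, div_le_iff₀ hg]
          have h2 := hhalf (n + 1)
          rw [show n + 1 + 1 = n + 2 from rfl] at h2
          nlinarith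
  have hHle : ∀ n : ℕ, 0 ≤ 2 * (H (τ (n + 1)) - H (τ (n + 2))) := by
    intro n
    have h1 := hinc _ (hτ (n + 2)) _ (hτ (n + 1)) (hτle (n + 1))
    have h3 := hVm (hτ (n + 2)) (hτ (n + 1)) (hτle (n + 1))
    have hg : 0 < g (V (τ (n + 1))) := hgpos _ (by rw [hVτ]; exact hpos _)
    have h4 := nonneg_of_mul_nonneg_right ((sub_nonneg.2 h3).trans h1) hg
    linarith
  have hcover : Set.Ioc (0 : ℝ) a ⊆ ⋃ n : ℕ, Set.Ioc (a / 2 ^ (n + 1)) (a / 2 ^ n) := by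
    intro u hu
    obtain ⟨n, h1, h2⟩ := exists_nat_pow_near (x := a / u) (y := (2 : ℝ))
      ((one_le_div hu.1).2 hu.2) (by norm_num)
    refine Set.mem_iUnion.2 ⟨n, ?_, ?_⟩
    · rw [div_lt_iff₀ hu.1] at h2
      rw [div_lt_iff₀ (by positivity)]
      linarith
    · rw [le_div_iff₀ hu.1] at h1
      rw [le_div_iff₀ (by positivity)]
      linarith
  refine ne_top_of_le_ne_top (b := ENNReal.ofReal (2 * M)) ENNReal.ofReal_ne_top ?_
  calc _ ≤ ∫⁻ u in ⋃ n : ℕ, Set.Ioc (a / 2 ^ (n + 1)) (a / 2 ^ n), ENNReal.ofReal (1 / g u) :=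
        lintegral_mono_set hcover
    _ ≤ ∑' n : ℕ, ∫⁻ u in Set.Ioc (a / 2 ^ (n + 1)) (a / 2 ^ n), ENNReal.ofReal (1 / g u) :=
        lintegral_iUnion_le _ _
    _ ≤ ∑' n : ℕ, ENNReal.ofReal (2 * (H (τ (n + 1)) - H (τ (n + 2)))) :=
        ENNReal.tsum_le_tsum hblock
    _ ≤ ENNReal.ofReal (2 * M) := by
        refine ENNReal.tsum_le_of_sum_range_le fun N => ?_
        rw [← ENNReal.ofReal_sum_of_nonneg fun i _ => hHle i, ← Finset.mul_sum,
          Finset.sum_range_sub' (fun n => H (τ (n + 1)))]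
        refine ENNReal.ofReal_le_ofReal ?_
        linarith [hHM _ (hτ (0 + 1)), hH0 _ (hτ (N + 1))]

/-- Osgood-type uniqueness lemma: if `h : [0,T] → [0,∞)` is Lebesgue integrable,
`g : [0,∞) → [0,∞)` is increasing with `g(u) > 0` for `u > 0` and
`∫_0^ε du/g(u) = ∞` for every `ε > 0`, and `S : [0,T] → [0,∞)` is nondecreasing with
`S(t) ≤ ∫_0^t h(s) g(S(s)) ds` for all `t ∈ [0,T]`, then `S ≡ 0` on `[0,T]`. -/
theorem osgood_zero (T : ℝ) (hT : 0 < T)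
    (h : ℝ → ℝ) (hh0 : ∀ s, 0 ≤ h s) (hhint : IntegrableOn h (Set.Icc 0 T) volume)
    (g : ℝ → ℝ) (hg0 : ∀ u, 0 ≤ u → 0 ≤ g u) (hgpos : ∀ u, 0 < u → 0 < g u)
    (hgmono : MonotoneOn g (Set.Ici 0))
    (hosgood : ∀ ε : ℝ, 0 < ε →
      (∫⁻ u in Set.Ioc (0 : ℝ) ε, ENNReal.ofReal (1 / g u)) = ⊤)
    (S : ℝ → ℝ) (hS0 : ∀ t ∈ Set.Icc (0 : ℝ) T, 0 ≤ S t)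
    (hSmono : MonotoneOn S (Set.Icc 0 T))
    (hS : ∀ t ∈ Set.Icc (0 : ℝ) T, S t ≤ ∫ s in (0 : ℝ)..t, h s * g (S s)) :
    ∀ t ∈ Set.Icc (0 : ℝ) T, S t = 0 := by
  -- `g ∘ S` is monotone and bounded, so the integrand inherits integrability from `h`.
  have hgS : MonotoneOn (fun s => g (S s)) (Set.Icc 0 T) := fun x hx y hy hxy =>
    hgmono (hS0 x hx) (hS0 y hy) (hSmono hx hy hxy)
  have hf : IntegrableOn (fun s => h s * g (S s)) (Set.Icc 0 T) volume := by
    refine Integrable.mul_bdd (c := g (S T)) hhint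
      (aemeasurable_restrict_of_monotoneOn measurableSet_Icc hgS).aestronglyMeasurable ?_
    filter_upwards [ae_restrict_mem measurableSet_Icc] with s hs
    rw [Real.norm_of_nonneg (hg0 _ (hS0 s hs))]
    exact hgS hs ⟨hT.le, le_rfl⟩ hs.2
  have hii : ∀ {f : ℝ → ℝ}, IntegrableOn f (Set.Icc 0 T) volume → ∀ x ∈ Set.Icc 0 T,
      ∀ y ∈ Set.Icc 0 T, IntervalIntegrable f volume x y := fun hf x hx y hy =>
    (hf.mono_set (Set.uIcc_subset_Icc hx hy)).intervalIntegrable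
  have h0 : (0 : ℝ) ∈ Set.Icc 0 T := ⟨le_rfl, hT.le⟩
  have hTT : T ∈ Set.Icc 0 T := ⟨hT.le, le_rfl⟩
  have hHdiff : ∀ x ∈ Set.Icc 0 T, ∀ y ∈ Set.Icc 0 T,
      (∫ s in (0 : ℝ)..y, h s) - ∫ s in (0 : ℝ)..x, h s = ∫ s in x..y, h s := fun x hx y hy =>
    intervalIntegral.integral_interval_sub_left (hii hhint _ h0 _ hy) (hii hhint _ h0 _ hx)
  have hVdiff : ∀ x ∈ Set.Icc 0 T, ∀ y ∈ Set.Icc 0 T,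
      (∫ s in (0 : ℝ)..y, h s * g (S s)) - ∫ s in (0 : ℝ)..x, h s * g (S s) =
        ∫ s in x..y, h s * g (S s) := fun x hx y hy =>
    intervalIntegral.integral_interval_sub_left (hii hf _ h0 _ hy) (hii hf _ h0 _ hx)
  intro t ht
  by_contra hne
  have hSt : 0 < S t := lt_of_le_of_ne (hS0 t ht) (Ne.symm hne)
  have hsub : Set.Icc 0 t ⊆ Set.Icc 0 T := Set.Icc_subset_Icc_right ht.2
  have hVt := hSt.trans_le (hS t ht)
  refine osgood_dyadic (V := fun t => ∫ s in (0 : ℝ)..t, h s * g (S s))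
    (H := fun t => ∫ s in (0 : ℝ)..t, h s) (M := ∫ s in (0 : ℝ)..T, h s) ht.1 hgpos hgmono
    ?_ ?_ (by simp) hVt ?_ ?_ ?_ (hosgood _ hVt)
  · have := intervalIntegral.continuousOn_primitive_interval (a := 0) (b := T) (μ := volume)
      (f := fun s => h s * g (S s)) (by rwa [Set.uIcc_of_le hT.le])
    rw [Set.uIcc_of_le hT.le] at this
    exact this.mono hsub
  · intro x hx y hy hxy
    refine sub_nonneg.1 ?_
    rw [hVdiff x (hsub hx) y (hsub hy)]
    exact intervalIntegral.integral_nonneg hxy fun s hs =>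
      mul_nonneg (hh0 s) (hg0 _ (hS0 s ⟨hx.1.trans hs.1, hs.2.trans (hsub hy).2⟩))
  · exact fun x hx => intervalIntegral.integral_nonneg hx.1 fun s _ => hh0 s
  · intro x hx
    refine sub_nonneg.1 ?_
    rw [hHdiff x (hsub hx) T hTT]
    exact intervalIntegral.integral_nonneg (hsub hx).2 fun s _ => hh0 s
  · intro x hx y hy hxy
    rw [hVdiff x (hsub hx) y (hsub hy), hHdiff x (hsub hx) y (hsub hy),
      ← intervalIntegral.integral_const_mul]
    refine intervalIntegral.integral_mono_on hxy (hii hf _ (hsub hx) _ (hsub hy))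
      ((hii hhint _ (hsub hx) _ (hsub hy)).const_mul _) fun s hs => ?_
    rw [mul_comm]
    have hs' : s ∈ Set.Icc 0 T := ⟨hx.1.trans hs.1, hs.2.trans (hsub hy).2⟩
    -- `S s ≤ S y ≤ V y`
    have hSV := (hSmono hs' (hsub hy) hs.2).trans (hS y (hsub hy))
    exact mul_le_mul_of_nonneg_right
      (hgmono (hS0 s hs') ((hS0 s hs').trans hSV) hSV) (hh0 s)
end

section
/- Let T > 0, let h : [0,T] → [0,∞) be Lebesgue integrable, let g : [0,∞) → [0,∞) be increasing with g(u) > 0 for u > 0, and let f : [0,T] → [0,∞) be measurable and integrable with f(s) ≤ h(s) g(F(s)) for almost every s ∈ [0,T], where F(t) := ∫_0^t f(s) ds. Then for every t ∈ [0,T] one has ∫_0^{F(t)} du/g(u) ≤ ∫_0^t h(s) ds. -/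
open MeasureTheory

/-!
The substitution `u = F s` is carried out at the level of measures: for `F t = ∫₀ᵗ f`, the
pushforward under `F` of the measure `f ds` on `[0, t]` is Lebesgue measure on `[0, F t]`
(`map_primitive_withDensity`), because for `a ≥ 0` the set
`{s ∈ [0, t] | F s ≤ a}` is an interval `[0, c]` with
`F c = min a (F t)`. Hence `∫_0^{F t} du / g u ≤ ∫_0^t f s / g (F s) ds`, and the hypothesis
`f ≤ h * g ∘ F` bounds the integrand on the right by `h`. No regularity of `1 / g` near `0` is
needed, since everything takes place in `[0, ∞]`.
-/

/-- Substitution for the absolutely continuous monotone function `F = ∫₀ f`, as an identity of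
measures. -/
lemma map_primitive_withDensity {t : ℝ} (ht : 0 ≤ t) {f F : ℝ → ℝ} (hf0 : ∀ s, 0 ≤ f s)
    (hfint : IntegrableOn f (Set.Icc 0 t) volume)
    (hF : ∀ t, F t = ∫ s in (0 : ℝ)..t, f s) :
    (((volume.restrict (Set.Icc 0 t)).withDensity fun s => ENNReal.ofReal (f s)).map F) =
      volume.restrict (Set.Icc 0 (F t)) := by
  set μ := (volume.restrict (Set.Icc 0 t)).withDensity fun s => ENNReal.ofReal (f s) with hμ
  have hF0 : F 0 = 0 := by simp [hF]
  have hcont : ContinuousOn F (Set.Icc 0 t) := by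
    have := intervalIntegral.continuousOn_primitive_interval (μ := volume) (f := f) (a := 0)
      (b := t) (by rwa [Set.uIcc_of_le ht])
    rw [Set.uIcc_of_le ht] at this
    exact this.congr fun s _ => hF s
  have hint : ∀ c ∈ Set.Icc 0 t, IntegrableOn f (Set.Icc 0 c) volume := fun c hc =>
    hfint.mono_set (Set.Icc_subset_Icc_right hc.2)
  have hval : ∀ c ∈ Set.Icc 0 t, μ (Set.Icc 0 c) = ENNReal.ofReal (F c) := by
    intro c hc
    rw [hμ, withDensity_apply _ measurableSet_Icc, Measure.restrict_restrict measurableSet_Icc,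
      Set.inter_eq_left.2 (Set.Icc_subset_Icc_right hc.2), hF,
      intervalIntegral.integral_of_le hc.1, ← integral_Icc_eq_integral_Ioc,
      ofReal_integral_eq_lintegral_ofReal (hint c hc) (Filter.Eventually.of_forall hf0)]
  have hmono : MonotoneOn F (Set.Icc 0 t) := by
    intro a ha b hb hab
    rw [hF, hF, intervalIntegral.integral_of_le ha.1, intervalIntegral.integral_of_le hb.1]
    exact setIntegral_mono_set ((hint b hb).mono_set Set.Ioc_subset_Icc_self)
      (Filter.Eventually.of_forall hf0) (Set.Ioc_subset_Ioc_right hab).eventuallyLE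
  have h0 : (0 : ℝ) ∈ Set.Icc 0 t := ⟨le_rfl, ht⟩
  have h1 : t ∈ Set.Icc 0 t := ⟨ht, le_rfl⟩
  have hnn : ∀ s ∈ Set.Icc 0 t, 0 ≤ F s := fun s hs => hF0 ▸ hmono h0 hs hs.1
  have hac : μ ≪ volume.restrict (Set.Icc 0 t) := withDensity_absolutelyContinuous _ _
  have hFm : AEMeasurable F μ := (hcont.aemeasurable measurableSet_Icc).mono_ac hac
  have hmem : ∀ᵐ s ∂μ, s ∈ Set.Icc 0 t := hac (ae_restrict_mem measurableSet_Icc)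
  have : IsFiniteMeasure μ := by
    refine ⟨?_⟩
    rw [← measure_congr (s := Set.Icc 0 t) (Filter.eventuallyEq_univ.2 hmem),
      hval t h1]
    exact ENNReal.ofReal_lt_top
  refine Measure.ext_of_Iic _ _ fun a => ?_
  rw [Measure.map_apply_of_aemeasurable hFm measurableSet_Iic,
    Measure.restrict_apply measurableSet_Iic]
  rcases lt_or_ge a 0 with ha | ha
  · have e1 : μ (F ⁻¹' Set.Iic a) = 0 := by
      refine measure_mono_null ?_ hmem
      intro s hs hs'
      exact absurd (hnn s hs') (not_le.2 (lt_of_le_of_lt hs ha))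
    have e2 : Set.Iic a ∩ Set.Icc 0 (F t) = ∅ := by
      ext u
      simp only [Set.mem_inter_iff, Set.mem_Iic, Set.mem_Icc, Set.mem_empty_iff_false, iff_false]
      intro hu
      linarith [hu.1, hu.2.1]
    rw [e1, e2, measure_empty]
  · -- `c` is the last point of `[0, t]` at which `F ≤ a`.
    have hK : IsCompact (Set.Icc 0 t ∩ F ⁻¹' Set.Iic a) :=
      isCompact_Icc.of_isClosed_subset
        (hcont.preimage_isClosed_of_isClosed isClosed_Icc isClosed_Iic) Set.inter_subset_left
    obtain ⟨c, ⟨hc, hca⟩, hmax⟩ := hK.exists_isGreatest ⟨0, h0, by simpa [hF0] using ha⟩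
    have hFc : F c = min a (F t) := by
      refine le_antisymm (le_min hca (hmono hc h1 hc.2)) ?_
      obtain ⟨d, hd, hda⟩ := intermediate_value_Icc ht hcont
        (show min a (F t) ∈ Set.Icc (F 0) (F t) from
          ⟨by rw [hF0]; exact le_min ha (hnn t h1), min_le_right _ _⟩)
      rw [← hda]
      exact hmono hd hc (hmax ⟨hd, by simp [hda]⟩)
    have e1 : μ (F ⁻¹' Set.Iic a) = μ (Set.Icc 0 c) := by
      refine measure_congr ?_
      filter_upwards [hmem] with s hs
      refine propext ⟨fun hsa => ⟨hs.1, hmax ⟨hs, hsa⟩⟩, fun hsc => ?_⟩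
      exact (hmono hs hc hsc.2).trans hca
    have e2 : Set.Iic a ∩ Set.Icc 0 (F t) = Set.Icc 0 (min a (F t)) := by
      ext u
      simp only [Set.mem_inter_iff, Set.mem_Iic, Set.mem_Icc, le_min_iff]
      tauto
    rw [e1, e2, hval c hc, hFc, Real.volume_Icc, sub_zero]

/-- Bihari-type estimate: let `h : [0,T] → [0,∞)` be Lebesgue integrable,
`g : [0,∞) → [0,∞)` increasing with `g(u) > 0` for `u > 0`, and `f : [0,T] → [0,∞)`
measurable and integrable with `f(s) ≤ h(s) g(F(s))` for a.e. `s ∈ [0,T]`, where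
`F(t) := ∫_0^t f(s) ds`.  Then `∫_0^{F(t)} du/g(u) ≤ ∫_0^t h(s) ds` for all `t ∈ [0,T]`,
the left-hand side being the (possibly infinite) Lebesgue integral of `1/g` over
`(0, F(t))`. -/
theorem bihari_estimate (T : ℝ) (hT : 0 < T)
    (h : ℝ → ℝ) (hh0 : ∀ s, 0 ≤ h s) (hhint : IntegrableOn h (Set.Icc 0 T) volume)
    (g : ℝ → ℝ) (hg0 : ∀ u, 0 ≤ u → 0 ≤ g u) (hgpos : ∀ u, 0 < u → 0 < g u)
    (hgmono : MonotoneOn g (Set.Ici 0))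
    (f : ℝ → ℝ) (hfm : Measurable f) (hf0 : ∀ s, 0 ≤ f s)
    (hfint : IntegrableOn f (Set.Icc 0 T) volume)
    (F : ℝ → ℝ) (hF : ∀ t, F t = ∫ s in (0 : ℝ)..t, f s)
    (hfg : ∀ᵐ s ∂(volume.restrict (Set.Icc (0 : ℝ) T)), f s ≤ h s * g (F s)) :
    ∀ t ∈ Set.Icc (0 : ℝ) T,
      (∫⁻ u in Set.Ioo (0 : ℝ) (F t), ENNReal.ofReal (1 / g u)) ≤
        ENNReal.ofReal (∫ s in (0 : ℝ)..t, h s) := by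
  intro t ht
  have hsub : Set.Icc 0 t ⊆ Set.Icc 0 T := Set.Icc_subset_Icc_right ht.2
  calc (∫⁻ u in Set.Ioo (0 : ℝ) (F t), ENNReal.ofReal (1 / g u))
      ≤ ∫⁻ u in Set.Icc (0 : ℝ) (F t), ENNReal.ofReal (1 / g u) :=
        lintegral_mono_set Set.Ioo_subset_Icc_self
    _ ≤ ∫⁻ s, ENNReal.ofReal (1 / g (F s))
          ∂((volume.restrict (Set.Icc 0 t)).withDensity fun s => ENNReal.ofReal (f s)) := by
        rw [← map_primitive_withDensity ht.1 hf0 (hfint.mono_set hsub) hF]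
        exact lintegral_map_le _ _
    _ ≤ ∫⁻ s in Set.Icc 0 t, ENNReal.ofReal (f s) * ENNReal.ofReal (1 / g (F s)) :=
        lintegral_withDensity_le_lintegral_mul _ hfm.ennreal_ofReal _
    _ ≤ ∫⁻ s in Set.Icc 0 t, ENNReal.ofReal (h s) := by
        refine lintegral_mono_ae ?_
        filter_upwards [ae_restrict_of_ae_restrict_of_subset hsub hfg,
          ae_restrict_mem measurableSet_Icc] with s hs hst
        rw [← ENNReal.ofReal_mul (hf0 s)]
        refine ENNReal.ofReal_le_ofReal ?_
        have hFs : 0 ≤ F s := by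
          rw [hF]
          exact intervalIntegral.integral_nonneg_of_forall hst.1 hf0
        -- When `g (F s) = 0`, which forces `F s = 0`, the left side is `f s * (1 / 0) = 0`.
        rcases (hg0 _ hFs).eq_or_lt with hz | hp
        · simpa [← hz] using hh0 s
        · rw [mul_one_div, div_le_iff₀ hp]
          exact hs
    _ = ENNReal.ofReal (∫ s in (0 : ℝ)..t, h s) := by
        rw [intervalIntegral.integral_of_le ht.1, ← integral_Icc_eq_integral_Ioc,
          ofReal_integral_eq_lintegral_ofReal (hhint.mono_set hsub)
            (Filter.Eventually.of_forall hh0)]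
end
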